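/- There is no algebra homomorphism χ : C([−1,1], ℂ) → ℂ which is continuous with respect to the supremum norm and satisfies χ(h|_{[−1,1]}) = h(i) for every continuous function h : {z ∈ ℂ : |z| ≤ 1} → ℂ that is complex differentiable (holomorphic) at every point of the open disc {z ∈ ℂ : |z| < 1}. -/

import Mathlib

/-- The character `h ↦ h(i)` of the disc algebra (viewed as a dense
subalgebra of `C([-1,1], ℂ)` via restriction) does not extend to a sup-norm-continuous
character of `C([-1,1], ℂ)`. -/
theorem no_continuous_extension_of_disc_algebra_character
    (χ : C(Set.Icc (-1 : ℝ) 1, ℂ) →ₐ[ℂ] ℂ)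
    (hcont : Continuous χ)
    (hval : ∀ h : ℂ → ℂ, ContinuousOn h (Metric.closedBall (0 : ℂ) 1) →
      (∀ z ∈ Metric.ball (0 : ℂ) 1, DifferentiableAt ℂ h z) →
      ∀ G : C(Set.Icc (-1 : ℝ) 1, ℂ),
        (∀ x : Set.Icc (-1 : ℝ) 1, G x = h ((x : ℝ) : ℂ)) →
        χ G = h Complex.I) :
    False := by
  -- `x - i` vanishes at `i`, so `χ` kills its restriction; but it has no zero on `[-1,1]`,
  -- so that restriction is a unit, and an algebra homomorphism cannot kill a unit.
  have hne : ∀ x : Set.Icc (-1 : ℝ) 1, ((x : ℝ) : ℂ) - Complex.I ≠ 0 := by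
    intro x hx
    simpa using congrArg Complex.im hx
  let G : C(Set.Icc (-1 : ℝ) 1, ℂ) := ⟨fun x => ((x : ℝ) : ℂ) - Complex.I, by fun_prop⟩
  let F : C(Set.Icc (-1 : ℝ) 1, ℂ) :=
    ⟨fun x => (((x : ℝ) : ℂ) - Complex.I)⁻¹, Continuous.inv₀ (by fun_prop) hne⟩
  have hGF : G * F = 1 := by
    ext x
    exact mul_inv_cancel₀ (hne x)
  have hG : χ G = 0 := by
    rw [hval (fun z => z - Complex.I) (by fun_prop) (fun z _ => by fun_prop) G (fun _ => rfl),
      sub_self]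
  have h1 : χ (G * F) = 1 := by rw [hGF, map_one]
  rw [map_mul, hG, zero_mul] at h1
  exact zero_ne_one h1
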